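/- Let 4 ≤ p < q, n = p + q, and suppose 2p < q + 4. Every tree T ∈ 𝒯_n^{p,q} that is isomorphic to none of B_{p,q}^{0,0}, B_{p,q}^{0,1}, B_{p,q}^{2,0}, B_{p,q}^{0,2} satisfies T ≺_s B_{p,q}^{0,2}; that is, in this case B_{p,q}^{0,2} is the unique fourth last tree in the S-order among 𝒯_n^{p,q}. -/

import Mathlib

open SimpleGraph

open scoped Classical in
/-- The adjacency matrix of a simple graph, with real entries. -/
noncomputable def adjMat {V : Type*} [Fintype V] (G : SimpleGraph V) : Matrix V V ℝ :=
  Matrix.of fun a b => if G.Adj a b then 1 else 0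

/-- The `k`-th spectral moment `S_k(G) = tr(A(G)^k)`. -/
noncomputable def spectralMoment {V : Type*} [Fintype V] [DecidableEq V]
    (G : SimpleGraph V) (k : ℕ) : ℝ :=
  Matrix.trace (adjMat G ^ k)

/-- `SLt G₁ G₂` means `G₁ ≺_s G₂`: for some `k` with `1 ≤ k ≤ n - 1`,
`S_i(G₁) = S_i(G₂)` for all `i < k` and `S_k(G₁) < S_k(G₂)`. -/
def SLt {V : Type*} [Fintype V] [DecidableEq V] (G₁ G₂ : SimpleGraph V) : Prop :=
  ∃ k : ℕ, 1 ≤ k ∧ k ≤ Fintype.card V - 1 ∧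
    (∀ i < k, spectralMoment G₁ i = spectralMoment G₂ i) ∧
    spectralMoment G₁ k < spectralMoment G₂ k

/-- The tree `B_{p,q}^{k,l}` on `p + q` vertices: vertex `0 = u` is adjacent to `1 = v`
and to the `q - 1` vertices `2, …, q`; the distinguished neighbor `2` of `u` carries the
`k` pendant leaves `q+1, …, q+k`; the `l` neighbors `3, …, l+2` of `u` carry one pendant
leaf each (`q+k+j` is attached to `j+2` for `1 ≤ j ≤ l`); and `v` carries the
`p - k - l - 1` pendant leaves `q+k+l+1, …, p+q-1`. -/
def BTree (p q k l : ℕ) : SimpleGraph (Fin (p + q)) :=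
  SimpleGraph.fromRel (fun a b =>
    (a.val = 0 ∧ b.val = 1) ∨
    (a.val = 0 ∧ 2 ≤ b.val ∧ b.val ≤ q) ∨
    (a.val = 2 ∧ q + 1 ≤ b.val ∧ b.val ≤ q + k) ∨
    (q + k + 1 ≤ b.val ∧ b.val ≤ q + k + l ∧ a.val = b.val - (q + k) + 2) ∨
    (a.val = 1 ∧ q + k + l + 1 ≤ b.val))

/-- The tree `D_{p,q}^{k,l}` on `p + q` vertices: vertex `1 = v` is adjacent to `0 = u`
and to the `p - 1` vertices `2, …, p`; the distinguished neighbor `2` of `v` carries the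
`k` pendant leaves `p+1, …, p+k`; the `l` neighbors `3, …, l+2` of `v` carry one pendant
leaf each; and `u` carries the `q - k - l - 1` pendant leaves `p+k+l+1, …, p+q-1`. -/
def DTree (p q k l : ℕ) : SimpleGraph (Fin (p + q)) :=
  SimpleGraph.fromRel (fun a b =>
    (a.val = 0 ∧ b.val = 1) ∨
    (a.val = 1 ∧ 2 ≤ b.val ∧ b.val ≤ p) ∨
    (a.val = 2 ∧ p + 1 ≤ b.val ∧ b.val ≤ p + k) ∨
    (p + k + 1 ≤ b.val ∧ b.val ≤ p + k + l ∧ a.val = b.val - (p + k) + 2) ∨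
    (a.val = 0 ∧ p + k + l + 1 ≤ b.val))

/-- `T ∈ 𝒯_{p+q}^{p,q}`: `T` is a tree on `p + q` vertices with a `(p,q)`-bipartition. -/
def TreeBip (p q : ℕ) (G : SimpleGraph (Fin (p + q))) : Prop :=
  G.IsTree ∧ ∃ A : Finset (Fin (p + q)), A.card = p ∧
    ∀ ⦃x y : Fin (p + q)⦄, G.Adj x y → (x ∈ A ↔ y ∉ A)

/-!
In a tree the closed walks of length 4 and 6 are counted by the excesses `e v = deg v - 1`: up to
terms depending only on `n`, `S_4` is `2 ∑ e²`, and once `S_4` is fixed `S_6` is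
`2 ∑ e³ + 3 ∑_{x ~ y} e x * e y`. For a tree with parts `A`, `Aᶜ` of sizes `p`, `q`, the last sum is
at most `2 (∑_A e) (∑_{Aᶜ} e) = 2 (q - 1) (p - 1)`, with equality when a hub in `A` is adjacent to
all of `Aᶜ`, as in `B_{p,q}^{k,l}`. So comparing with `B_{p,q}^{0,2}` only requires comparing the
power sums `∑ e²` and `∑ e³`.

A tree with a hub is determined by the excesses on `Aᶜ`, which add up to `p - 1`: if one of them is
at least `p - 3`, the tree is one of the four exceptions, and otherwise the power sums are too
small. Without a hub the excesses on `A` are at most `q - 2`, and `2 p < q + 4` is exactly what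
makes the sum of squares too small.
-/

section NeighborSums

variable {V M : Type*} [Fintype V] [AddCommMonoid M]

lemma sum_sum_neighborFinset (G : SimpleGraph V) [DecidableRel G.Adj] (f : V → M) :
    ∑ x, ∑ y ∈ G.neighborFinset x, f y = ∑ x, G.degree x • f x := by
  rw [Finset.sum_comm' (s' := fun y => G.neighborFinset y) (t' := Finset.univ)
    (by simp [G.adj_comm])]
  simp

end NeighborSums

section SpectralMoments

variable {V : Type*} [Fintype V]

lemma adjMat_eq_adjMatrix (G : SimpleGraph V) [DecidableRel G.Adj] :
    adjMat G = G.adjMatrix ℝ := by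
  ext x y
  simp only [adjMat, Matrix.of_apply, adjMatrix_apply]
  congr

variable [DecidableEq V] {G : SimpleGraph V} [DecidableRel G.Adj]

lemma spectralMoment_eq_sum (G : SimpleGraph V) [DecidableRel G.Adj] (k : ℕ) :
    spectralMoment G k = ∑ x, (G.adjMatrix ℝ ^ k) x x := by
  rw [spectralMoment, adjMat_eq_adjMatrix]
  rfl

lemma spectralMoment_two_mul (G : SimpleGraph V) [DecidableRel G.Adj] (k : ℕ) :
    spectralMoment G (2 * k) = ∑ x, ∑ y, (G.adjMatrix ℝ ^ k) x y ^ 2 := by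
  have hsymm := G.isSymm_adjMatrix (α := ℝ) |>.pow k
  simp only [spectralMoment_eq_sum, two_mul, pow_add, Matrix.mul_apply, sq]
  refine Finset.sum_congr rfl fun x _ => Finset.sum_congr rfl fun y _ => ?_
  rw [hsymm.apply x y]

lemma spectralMoment_zero (G : SimpleGraph V) : spectralMoment G 0 = Fintype.card V := by
  simp [spectralMoment]

lemma spectralMoment_two (G : SimpleGraph V) [DecidableRel G.Adj] :
    spectralMoment G 2 = ∑ x, (G.degree x : ℝ) := by
  simp only [spectralMoment_eq_sum, sq, adjMatrix_mul_self_apply_self]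

lemma adjMatrix_pow_apply_self_of_odd (hG : G.Colorable 2) {k : ℕ} (hk : Odd k) (x : V) :
    (G.adjMatrix ℝ ^ k) x x = 0 := by
  rw [adjMatrix_pow_apply_eq_card_walk, Nat.cast_eq_zero, Fintype.card_eq_zero_iff]
  refine ⟨fun w => Nat.not_even_iff_odd.2 hk ?_⟩
  exact w.2 ▸ two_colorable_iff_forall_loop_even.1 hG x w.1

lemma spectralMoment_of_odd {G : SimpleGraph V} (hG : G.Colorable 2) {k : ℕ} (hk : Odd k) :
    spectralMoment G k = 0 := by
  classical
  rw [spectralMoment_eq_sum]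
  exact Finset.sum_eq_zero fun x _ => adjMatrix_pow_apply_self_of_odd hG hk x

-- The entry counts walks from `x` to `y`, and an acyclic graph has at most one path.
lemma sq_adjMatrix_pow_apply (hG : G.IsAcyclic) {k : ℕ} {x y : V}
    (hpath : ∀ w : G.Walk x y, w.length = k → w.IsPath) :
    (G.adjMatrix ℝ ^ k) x y ^ 2 = (G.adjMatrix ℝ ^ k) x y := by
  have hpaths := hG.subsingleton_path x y
  have hwalks : Subsingleton {w : G.Walk x y | w.length = k} :=
    Function.Injective.subsingleton (f := fun w => (⟨w.1, hpath w.1 w.2⟩ : G.Path x y))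
      fun _ _ h => Subtype.ext (congrArg (fun P : G.Path x y => P.1) h)
  rw [adjMatrix_pow_apply_eq_card_walk]
  rcases Nat.le_one_iff_eq_zero_or_eq_one.1 (Fintype.card_le_one_iff_subsingleton.2 hwalks)
    with h | h <;> simp [h]

lemma sq_adjMatrix_sq_apply_of_ne (hG : G.IsAcyclic) {x y : V} (hxy : x ≠ y) :
    (G.adjMatrix ℝ ^ 2) x y ^ 2 = (G.adjMatrix ℝ ^ 2) x y := by
  refine sq_adjMatrix_pow_apply hG fun w hw => ?_
  match w, hw with
  | .cons h₁ (.cons h₂ .nil), _ => simp [hxy, h₁.ne, h₂.ne]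

lemma adjMatrix_sq_apply_of_adj_of_adj (hG : G.IsAcyclic) {x y z : V} (hxz : x ≠ z)
    (hxy : G.Adj x y) (hyz : G.Adj y z) : (G.adjMatrix ℝ ^ 2) x z = 1 := by
  have hne : (G.adjMatrix ℝ ^ 2) x z ≠ 0 := by
    rw [adjMatrix_pow_apply_eq_card_walk, Nat.cast_ne_zero]
    exact Fintype.card_pos_iff.2 ⟨⟨.cons hxy (.cons hyz .nil), rfl⟩⟩ |>.ne'
  exact (mul_eq_left₀ hne).1 ((sq _).symm.trans (sq_adjMatrix_sq_apply_of_ne hG hxz))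

lemma sq_adjMatrix_sq_apply (hG : G.IsAcyclic) (x y : V) :
    (G.adjMatrix ℝ ^ 2) x y ^ 2 = (G.adjMatrix ℝ ^ 2) x y +
      if x = y then (G.degree x : ℝ) ^ 2 - G.degree x else 0 := by
  split_ifs with hxy
  · subst hxy
    rw [sq (G.adjMatrix ℝ), adjMatrix_mul_self_apply_self]
    ring
  · rw [add_zero, sq_adjMatrix_sq_apply_of_ne hG hxy]

lemma adjMatrix_cube_apply_of_adj (hG : G.IsAcyclic) {x y : V} (hxy : G.Adj x y) :
    (G.adjMatrix ℝ ^ 3) x y = G.degree x + G.degree y - 1 := by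
  have hmem : x ∈ G.neighborFinset y := by simpa using hxy.symm
  have hne : ∀ z ∈ (G.neighborFinset y).erase x, (G.adjMatrix ℝ ^ 2) x z = 1 := by
    intro z hz
    simp only [Finset.mem_erase, mem_neighborFinset] at hz
    exact adjMatrix_sq_apply_of_adj_of_adj hG hz.1.symm hxy hz.2
  rw [pow_succ, mul_adjMatrix_apply, ← Finset.add_sum_erase _ _ hmem, Finset.sum_congr rfl hne,
    sq, adjMatrix_mul_self_apply_self, Finset.sum_const, nsmul_one,
    Finset.cast_card_erase_of_mem hmem, card_neighborFinset_eq_degree]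
  ring

lemma sq_adjMatrix_cube_apply_of_not_adj (hG : G.IsAcyclic) {x y : V} (hxy : ¬ G.Adj x y) :
    (G.adjMatrix ℝ ^ 3) x y ^ 2 = (G.adjMatrix ℝ ^ 3) x y := by
  by_cases heq : x = y
  · subst heq
    rw [adjMatrix_pow_apply_self_of_odd hG.colorable_two (by decide)]
    norm_num
  refine sq_adjMatrix_pow_apply hG fun w hw => ?_
  match w, hw with
  | .cons h₁ (.cons h₂ (.cons h₃ .nil)), _ =>
    have hx : x ≠ _ := fun h => hxy (h ▸ h₃)
    have hy : _ ≠ y := fun h => hxy (h ▸ h₁)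
    simp [heq, h₁.ne, h₂.ne, h₃.ne, hx, hy]

lemma sq_adjMatrix_cube_apply (hG : G.IsAcyclic) (x y : V) :
    (G.adjMatrix ℝ ^ 3) x y ^ 2 = (G.adjMatrix ℝ ^ 3) x y +
      if G.Adj x y then (G.degree x + G.degree y - 1 : ℝ) * (G.degree x + G.degree y - 2)
      else 0 := by
  split_ifs with hxy
  · rw [adjMatrix_cube_apply_of_adj hG hxy]
    ring
  · rw [add_zero, sq_adjMatrix_cube_apply_of_not_adj hG hxy]

lemma sum_adjMatrix_pow_succ_apply (G : SimpleGraph V) [DecidableRel G.Adj] (k : ℕ) (x : V) :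
    ∑ y, (G.adjMatrix ℝ ^ (k + 1)) x y =
      ∑ z ∈ G.neighborFinset x, ∑ y, (G.adjMatrix ℝ ^ k) z y := by
  simp only [pow_succ', adjMatrix_mul_apply]
  exact Finset.sum_comm

lemma sum_adjMatrix_sq_apply (G : SimpleGraph V) [DecidableRel G.Adj] (x : V) :
    ∑ y, (G.adjMatrix ℝ ^ 2) x y = ∑ y ∈ G.neighborFinset x, (G.degree y : ℝ) := by
  simp only [sum_adjMatrix_pow_succ_apply G 1, sum_adjMatrix_pow_succ_apply G 0, pow_zero,
    Matrix.one_apply, Finset.sum_ite_eq, Finset.mem_univ, if_true, Finset.sum_const, nsmul_one,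
    card_neighborFinset_eq_degree]

lemma sum_sum_adjMatrix_sq (G : SimpleGraph V) [DecidableRel G.Adj] :
    ∑ x, ∑ y, (G.adjMatrix ℝ ^ 2) x y = ∑ x, (G.degree x : ℝ) ^ 2 := by
  simp only [sum_adjMatrix_sq_apply, sum_sum_neighborFinset, nsmul_eq_mul, ← sq]

lemma sum_sum_adjMatrix_cube (G : SimpleGraph V) [DecidableRel G.Adj] :
    ∑ x, ∑ y, (G.adjMatrix ℝ ^ 3) x y =
      ∑ x, ∑ y ∈ G.neighborFinset x, (G.degree x * G.degree y : ℝ) := by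
  simp only [sum_adjMatrix_pow_succ_apply G 2, sum_sum_neighborFinset, nsmul_eq_mul,
    sum_adjMatrix_sq_apply, Finset.mul_sum]

lemma spectralMoment_four_of_isAcyclic (hG : G.IsAcyclic) :
    spectralMoment G 4 = 2 * ∑ x, (G.degree x : ℝ) ^ 2 - ∑ x, (G.degree x : ℝ) := by
  rw [spectralMoment_two_mul G 2]
  simp only [sq_adjMatrix_sq_apply hG, Finset.sum_add_distrib, sum_sum_adjMatrix_sq,
    Finset.sum_ite_eq, Finset.mem_univ, if_true, Finset.sum_sub_distrib]
  ring

lemma spectralMoment_six_of_isAcyclic (hG : G.IsAcyclic) :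
    spectralMoment G 6 = 2 * ∑ x, (G.degree x : ℝ) ^ 3 - ∑ x, (G.degree x : ℝ) +
      3 * ∑ x, ∑ y ∈ G.neighborFinset x, ((G.degree x - 1) * (G.degree y - 1) : ℝ) := by
  have hswap : ∑ x, ∑ y ∈ G.neighborFinset x, (G.degree y : ℝ) ^ 2 =
      ∑ x, (G.degree x : ℝ) ^ 3 := by
    simp only [sum_sum_neighborFinset, nsmul_eq_mul, ← pow_succ']
  have hself (f : V → ℝ) : ∑ x, ∑ _y ∈ G.neighborFinset x, f x = ∑ x, G.degree x * f x := by
    simp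
  have hadj (x : V) (f : V → ℝ) :
      ∑ y, (if G.Adj x y then f y else 0) = ∑ y ∈ G.neighborFinset x, f y := by
    rw [← Finset.sum_filter, neighborFinset_eq_filter]
  rw [spectralMoment_two_mul G 3]
  simp only [sq_adjMatrix_cube_apply hG, Finset.sum_add_distrib, sum_sum_adjMatrix_cube, hadj]
  have expand (a b : ℝ) : a * b + (a + b - 1) * (a + b - 2) =
      (a ^ 2 - 1) + b ^ 2 + 3 * ((a - 1) * (b - 1)) := by ring
  simp only [← Finset.sum_add_distrib, expand]
  simp only [Finset.sum_add_distrib, hswap, hself, ← Finset.mul_sum]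
  simp only [mul_sub, ← pow_succ', mul_one, Finset.sum_sub_distrib]
  ring

end SpectralMoments

section Excess

variable {V : Type*} [Fintype V] {G : SimpleGraph V} [DecidableRel G.Adj]

/-- The excess `deg v - 1` of a vertex. In a nontrivial tree all degrees are positive, so the
truncated subtraction is harmless there, and the excesses add up to `n - 2`. -/
def excess (G : SimpleGraph V) [DecidableRel G.Adj] (v : V) : ℕ :=
  G.degree v - 1

/-- The sum of `excess x * excess y` over the ordered pairs of adjacent vertices, which is twice
the sum over the edges; it is the only term of `S_6` that does not depend on the degrees alone. -/
def edgeExcess (G : SimpleGraph V) [DecidableRel G.Adj] : ℕ :=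
  ∑ x, ∑ y ∈ G.neighborFinset x, excess G x * excess G y

lemma cast_excess {v : V} (hv : 0 < G.degree v) : (excess G v : ℝ) = G.degree v - 1 := by
  rw [excess, Nat.cast_pred hv]

lemma cast_edgeExcess (G : SimpleGraph V) [DecidableRel G.Adj] :
    (edgeExcess G : ℝ) =
      ∑ x, ∑ y ∈ G.neighborFinset x, ((G.degree x - 1) * (G.degree y - 1) : ℝ) := by
  simp only [edgeExcess, Nat.cast_sum, Nat.cast_mul]
  refine Finset.sum_congr rfl fun x _ => Finset.sum_congr rfl fun y hy => ?_
  have hxy := (mem_neighborFinset _ _ _).1 hy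
  rw [cast_excess hxy.degree_pos_left, cast_excess hxy.degree_pos_right]

variable [Nontrivial V]

lemma excess_add_one_of_isTree (hG : G.IsTree) (v : V) : excess G v + 1 = G.degree v :=
  Nat.sub_add_cancel (hG.connected.preconnected.degree_pos_of_nontrivial v)

lemma sum_excess_add_two (hG : G.IsTree) : ∑ v, excess G v + 2 = Fintype.card V := by
  have hsum := G.sum_degrees_eq_twice_card_edges
  have hcard := hG.card_edgeFinset
  simp only [← excess_add_one_of_isTree hG, Finset.sum_add_distrib, Finset.sum_const,
    Finset.card_univ, smul_eq_mul, mul_one] at hsum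
  omega

lemma cast_sum_excess (hG : G.IsTree) : ∑ v, (excess G v : ℝ) = Fintype.card V - 2 := by
  rw [← sum_excess_add_two hG]
  push_cast
  ring

lemma sum_degree_of_isTree (hG : G.IsTree) :
    ∑ v, (G.degree v : ℝ) = 2 * Fintype.card V - 2 := by
  simp only [← excess_add_one_of_isTree hG, Nat.cast_add, Nat.cast_one, Finset.sum_add_distrib,
    cast_sum_excess hG, Finset.sum_const, Finset.card_univ, nsmul_one]
  ring

lemma sum_degree_sq_of_isTree (hG : G.IsTree) :
    ∑ v, (G.degree v : ℝ) ^ 2 = ∑ v, (excess G v : ℝ) ^ 2 + 3 * Fintype.card V - 4 := by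
  have expand (e : ℝ) : (e + 1) ^ 2 = e ^ 2 + 2 * e + 1 := by ring
  simp only [← excess_add_one_of_isTree hG, Nat.cast_add, Nat.cast_one, expand,
    Finset.sum_add_distrib, ← Finset.mul_sum, cast_sum_excess hG, Finset.sum_const,
    Finset.card_univ, nsmul_one]
  ring

lemma sum_degree_cube_of_isTree (hG : G.IsTree) :
    ∑ v, (G.degree v : ℝ) ^ 3 = ∑ v, (excess G v : ℝ) ^ 3 + 3 * ∑ v, (excess G v : ℝ) ^ 2 +
      4 * Fintype.card V - 6 := by
  have expand (e : ℝ) : (e + 1) ^ 3 = e ^ 3 + 3 * e ^ 2 + 3 * e + 1 := by ring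
  simp only [← excess_add_one_of_isTree hG, Nat.cast_add, Nat.cast_one, expand,
    Finset.sum_add_distrib, ← Finset.mul_sum, cast_sum_excess hG, Finset.sum_const,
    Finset.card_univ, nsmul_one]
  ring

variable [DecidableEq V]

lemma spectralMoment_two_of_isTree {G : SimpleGraph V} (hG : G.IsTree) :
    spectralMoment G 2 = 2 * Fintype.card V - 2 := by
  classical
  rw [spectralMoment_two, sum_degree_of_isTree hG]

lemma spectralMoment_four_of_isTree (hG : G.IsTree) :
    spectralMoment G 4 = 2 * ∑ v, (excess G v : ℝ) ^ 2 + 4 * Fintype.card V - 6 := by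
  rw [spectralMoment_four_of_isAcyclic hG.isAcyclic, sum_degree_sq_of_isTree hG,
    sum_degree_of_isTree hG]
  ring

lemma spectralMoment_six_of_isTree (hG : G.IsTree) :
    spectralMoment G 6 = 2 * ∑ v, (excess G v : ℝ) ^ 3 + 6 * ∑ v, (excess G v : ℝ) ^ 2 +
      3 * edgeExcess G + 6 * Fintype.card V - 10 := by
  rw [spectralMoment_six_of_isAcyclic hG.isAcyclic, sum_degree_cube_of_isTree hG,
    sum_degree_of_isTree hG, cast_edgeExcess]
  ring

end Excess

section Comparison

variable {V : Type*} [Fintype V] [DecidableEq V] {G H : SimpleGraph V}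

lemma spectralMoment_eq_of_isTree_of_odd (hG : G.IsTree) (hH : H.IsTree) {k : ℕ} (hk : Odd k) :
    spectralMoment G k = spectralMoment H k := by
  rw [spectralMoment_of_odd hG.isAcyclic.colorable_two hk,
    spectralMoment_of_odd hH.isAcyclic.colorable_two hk]

lemma spectralMoment_eq_of_isTree_of_lt_four [Nontrivial V] (hG : G.IsTree) (hH : H.IsTree) {k : ℕ}
    (hk : k < 4) : spectralMoment G k = spectralMoment H k := by
  interval_cases k
  · rw [spectralMoment_zero, spectralMoment_zero]
  · exact spectralMoment_eq_of_isTree_of_odd hG hH (by decide)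
  · rw [spectralMoment_two_of_isTree hG, spectralMoment_two_of_isTree hH]
  · exact spectralMoment_eq_of_isTree_of_odd hG hH (by decide)

variable [DecidableRel G.Adj] [DecidableRel H.Adj]

lemma sLt_of_sum_excess_pow (hcard : 7 ≤ Fintype.card V) (hG : G.IsTree) (hH : H.IsTree)
    (hsq : ∑ v, excess G v ^ 2 ≤ ∑ v, excess H v ^ 2)
    (hcube : ∑ v, excess G v ^ 3 < ∑ v, excess H v ^ 3)
    (hedge : edgeExcess G ≤ edgeExcess H) : SLt G H := by
  have : Nontrivial V := Fintype.one_lt_card_iff_nontrivial.1 (by omega)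
  have hlow (i : ℕ) (hi : i < 4) : spectralMoment G i = spectralMoment H i :=
    spectralMoment_eq_of_isTree_of_lt_four hG hH hi
  rcases hsq.lt_or_eq with hlt | heq
  · refine ⟨4, by decide, by omega, hlow, ?_⟩
    rw [spectralMoment_four_of_isTree hG, spectralMoment_four_of_isTree hH]
    have hlt' : ∑ v, (excess G v : ℝ) ^ 2 < ∑ v, (excess H v : ℝ) ^ 2 := by exact_mod_cast hlt
    linarith
  · have heq' : ∑ v, (excess G v : ℝ) ^ 2 = ∑ v, (excess H v : ℝ) ^ 2 := by exact_mod_cast heq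
    have hfour : spectralMoment G 4 = spectralMoment H 4 := by
      rw [spectralMoment_four_of_isTree hG, spectralMoment_four_of_isTree hH, heq']
    refine ⟨6, by decide, by omega, fun i hi => ?_, ?_⟩
    · obtain hi | rfl | rfl : i < 4 ∨ i = 4 ∨ i = 5 := by omega
      · exact hlow i hi
      · exact hfour
      · exact spectralMoment_eq_of_isTree_of_odd hG hH (by decide)
    · rw [spectralMoment_six_of_isTree hG, spectralMoment_six_of_isTree hH]
      have hcube' : ∑ v, (excess G v : ℝ) ^ 3 < ∑ v, (excess H v : ℝ) ^ 3 := by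
        exact_mod_cast hcube
      have hedge' : (edgeExcess G : ℝ) ≤ edgeExcess H := Nat.cast_le.2 hedge
      linarith

end Comparison

section Bipartite

variable {V : Type*} [Fintype V] [DecidableEq V] {G : SimpleGraph V} {A : Finset V}

lemma isBipartiteWith_compl_iff :
    G.IsBipartiteWith A (Aᶜ : Finset V) ↔ ∀ ⦃x y : V⦄, G.Adj x y → (x ∈ A ↔ y ∉ A) := by
  refine ⟨fun h x y hxy => ?_, fun h => ⟨by simpa using disjoint_compl_right, fun x y hxy => ?_⟩⟩
  · have := h.mem_of_adj hxy
    simp only [Finset.mem_coe, Finset.mem_compl] at this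
    tauto
  · have := h hxy
    simp only [Finset.mem_coe, Finset.mem_compl]
    tauto

variable [DecidableRel G.Adj]

lemma sum_excess_add_one [Nontrivial V] (hG : G.IsTree)
    (hA : G.IsBipartiteWith A (Aᶜ : Finset V)) : ∑ a ∈ A, excess G a + 1 = Aᶜ.card := by
  have hsum := isBipartiteWith_sum_degrees_eq_card_edges hA
  have hedges := hG.card_edgeFinset
  simp only [← excess_add_one_of_isTree hG, Finset.sum_add_distrib, Finset.sum_const, smul_eq_mul,
    mul_one] at hsum
  have := A.card_add_card_compl
  omega

lemma sum_excess_compl_add_one [Nontrivial V] (hG : G.IsTree)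
    (hA : G.IsBipartiteWith A (Aᶜ : Finset V)) : ∑ b ∈ Aᶜ, excess G b + 1 = A.card := by
  have := sum_excess_add_one (A := Aᶜ) hG (by simpa using hA.symm)
  rwa [compl_compl] at this

lemma edgeExcess_eq_two_mul (hA : G.IsBipartiteWith A (Aᶜ : Finset V)) :
    edgeExcess G = 2 * ∑ a ∈ A, ∑ b ∈ G.neighborFinset a, excess G a * excess G b := by
  rw [edgeExcess, ← Finset.sum_add_sum_compl A, two_mul]
  congr 1
  rw [Finset.sum_comm' (s' := fun a => G.neighborFinset a) (t' := A)]
  · simp only [mul_comm]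
  · intro x y
    have hxy : G.Adj x y → (x ∈ A ↔ y ∉ A) := fun h => isBipartiteWith_compl_iff.1 hA h
    simp only [Finset.mem_compl, mem_neighborFinset, G.adj_comm y x]
    tauto

lemma edgeExcess_le (hA : G.IsBipartiteWith A (Aᶜ : Finset V)) :
    edgeExcess G ≤ 2 * ((∑ a ∈ A, excess G a) * ∑ b ∈ Aᶜ, excess G b) := by
  rw [edgeExcess_eq_two_mul hA, Finset.sum_mul_sum]
  gcongr with a ha
  exact isBipartiteWith_neighborFinset_subset hA ha

end Bipartite

section Hub

variable {V : Type*} [Fintype V] [DecidableEq V]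

/-- `IsHub G A u` says that `G` is bipartite with parts `A` and `Aᶜ`, that `u ∈ A` is adjacent to
all of `Aᶜ`, and that the other vertices of `A` are leaves. Up to isomorphism such a graph is
given by the excesses of the vertices of `Aᶜ`; the trees `B_{p,q}^{k,l}` are of this form. -/
structure IsHub (G : SimpleGraph V) (A : Finset V) (u : V) : Prop where
  isBipartiteWith : G.IsBipartiteWith A (Aᶜ : Finset V)
  hub_mem : u ∈ A
  adj_hub : ∀ ⦃b⦄, b ∉ A → G.Adj u b
  existsUnique_adj : ∀ ⦃a⦄, a ∈ A → a ≠ u → ∃! b, G.Adj a b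

namespace IsHub

variable {G : SimpleGraph V} {A : Finset V} {u : V}

lemma connected (h : IsHub G A u) : G.Connected := by
  have hcompl {b : V} (hb : b ∉ A) : G.Reachable u b := (h.adj_hub hb).reachable
  refine G.connected_iff_exists_forall_reachable.2 ⟨u, fun x => ?_⟩
  by_cases hx : x ∈ A
  · obtain rfl | hxu := eq_or_ne x u
    · rfl
    · obtain ⟨b, hxb, -⟩ := h.existsUnique_adj hx hxu
      have hb : b ∉ A := (isBipartiteWith_compl_iff.1 h.isBipartiteWith hxb).1 hx
      exact (hcompl hb).trans hxb.symm.reachable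
  · exact hcompl hx

variable [DecidableRel G.Adj]

lemma neighborFinset_hub (h : IsHub G A u) : G.neighborFinset u = Aᶜ := by
  refine (isBipartiteWith_neighborFinset_subset h.isBipartiteWith h.hub_mem).antisymm fun b hb => ?_
  exact (mem_neighborFinset _ _ _).2 (h.adj_hub (Finset.mem_compl.1 hb))

lemma degree_hub (h : IsHub G A u) : G.degree u = Aᶜ.card := by
  rw [← card_neighborFinset_eq_degree, h.neighborFinset_hub]

lemma degree_eq_one (h : IsHub G A u) {a : V} (ha : a ∈ A) (hau : a ≠ u) : G.degree a = 1 :=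
  degree_eq_one_iff_existsUnique_adj.2 (h.existsUnique_adj ha hau)

lemma excess_hub (h : IsHub G A u) : excess G u = Aᶜ.card - 1 := by
  rw [excess, h.degree_hub]

lemma excess_eq_zero (h : IsHub G A u) {a : V} (ha : a ∈ A) (hau : a ≠ u) : excess G a = 0 := by
  rw [excess, h.degree_eq_one ha hau]

lemma card_edgeFinset_add_one (h : IsHub G A u) :
    G.edgeFinset.card + 1 = Fintype.card V := by
  have hleaf : ∑ a ∈ A.erase u, G.degree a = (A.erase u).card := by
    rw [Finset.card_eq_sum_ones]
    exact Finset.sum_congr rfl fun a ha =>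
      h.degree_eq_one (Finset.mem_of_mem_erase ha) (Finset.ne_of_mem_erase ha)
  rw [← isBipartiteWith_sum_degrees_eq_card_edges h.isBipartiteWith,
    ← Finset.add_sum_erase _ _ h.hub_mem, h.degree_hub, hleaf, add_assoc,
    Finset.card_erase_add_one h.hub_mem, add_comm, Finset.card_add_card_compl]

lemma isTree {G : SimpleGraph V} (h : IsHub G A u) : G.IsTree := by
  classical
  rw [isTree_iff_connected_and_card, Nat.card_eq_fintype_card, Nat.card_eq_fintype_card,
    ← edgeFinset_card]
  exact ⟨h.connected, h.card_edgeFinset_add_one⟩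

lemma sum_excess_pow (h : IsHub G A u) {k : ℕ} (hk : k ≠ 0) :
    ∑ v, excess G v ^ k = (Aᶜ.card - 1) ^ k + ∑ b ∈ Aᶜ, excess G b ^ k := by
  have hleaf : ∀ a ∈ A, a ≠ u → excess G a ^ k = 0 := fun a ha hau => by
    rw [h.excess_eq_zero ha hau, zero_pow hk]
  rw [← Finset.sum_add_sum_compl A, Finset.sum_eq_single_of_mem u h.hub_mem hleaf, h.excess_hub]

lemma edgeExcess_eq (h : IsHub G A u) :
    edgeExcess G = 2 * ((∑ a ∈ A, excess G a) * ∑ b ∈ Aᶜ, excess G b) := by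
  have hleaf : ∀ a ∈ A, a ≠ u → excess G a = 0 := fun a ha => h.excess_eq_zero ha
  rw [edgeExcess_eq_two_mul h.isBipartiteWith, Finset.sum_eq_single_of_mem u h.hub_mem
    fun a ha hau => by simp [hleaf a ha hau], Finset.sum_eq_single_of_mem u h.hub_mem hleaf,
    h.neighborFinset_hub, ← Finset.mul_sum]

end IsHub

lemma IsHub.of_degree_eq [Nontrivial V] {G : SimpleGraph V} [DecidableRel G.Adj] {A : Finset V}
    {u : V} (hG : G.IsTree) (hA : G.IsBipartiteWith A (Aᶜ : Finset V)) (hu : u ∈ A)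
    (hdeg : G.degree u = Aᶜ.card) : IsHub G A u := by
  have hnbr : G.neighborFinset u = Aᶜ := Finset.eq_of_subset_of_card_le
    (isBipartiteWith_neighborFinset_subset hA hu) (by rw [card_neighborFinset_eq_degree, hdeg])
  have hleaf : ∑ a ∈ A.erase u, excess G a = 0 := by
    have hsum := sum_excess_add_one hG hA
    have hexc := excess_add_one_of_isTree hG u
    rw [← Finset.add_sum_erase _ _ hu] at hsum
    omega
  refine ⟨hA, hu, fun b hb => ?_, fun a ha hau => degree_eq_one_iff_existsUnique_adj.1 ?_⟩
  · rwa [← mem_neighborFinset, hnbr, Finset.mem_compl]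
  · rw [← excess_add_one_of_isTree hG a,
      Finset.sum_eq_zero_iff.1 hleaf a (Finset.mem_erase.2 ⟨hau, ha⟩)]

end Hub

section Isomorphism

lemma exists_equiv_of_card_fiber_eq {α β γ : Type*} [Finite α] [Finite β] {f : α → γ} {g : β → γ}
    (h : ∀ c, Nat.card {a // f a = c} = Nat.card {b // g b = c}) :
    ∃ e : α ≃ β, ∀ a, g (e a) = f a :=
  ⟨Equiv.ofFiberEquiv fun c => (Finite.card_eq.1 (h c)).some, Equiv.ofFiberEquiv_map _⟩

lemma card_subtype_coe {α : Type*} {s : Finset α} {p : α → Prop} (t : Finset α)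
    (ht : ∀ x, x ∈ t ↔ x ∈ s ∧ p x) : Nat.card {a : s // p a} = t.card :=
  (Nat.card_congr (Equiv.subtypeSubtypeEquivSubtypeInter (· ∈ s) p)).trans (Nat.subtype_card t ht)

lemma card_subtype_coe_eq_count_map {α γ : Type*} [DecidableEq γ] (s : Finset α) (f : α → γ)
    (c : γ) : Nat.card {a : s // f a = c} = (s.val.map f).count c := by
  rw [Multiset.count_map, ← Finset.filter_val, Finset.card_val]
  exact card_subtype_coe (p := fun x => f x = c) _ fun x => by simp [eq_comm]

variable {V W : Type*} [Fintype V] [DecidableEq V] [Fintype W] [DecidableEq W]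

/-- The splitting of the vertices into a finset and its complement. -/
def sumComplEquiv (A : Finset V) : A ⊕ (Aᶜ : Finset V) ≃ V :=
  (Equiv.sumCongr (.refl _) (Equiv.subtypeEquivRight fun _ => Finset.mem_compl)).trans
    (Equiv.sumCompl (· ∈ A))

lemma nonempty_iso_of_isBipartiteWith {G : SimpleGraph V} {H : SimpleGraph W} {A : Finset V}
    {B : Finset W} (hG : G.IsBipartiteWith A (Aᶜ : Finset V))
    (hH : H.IsBipartiteWith B (Bᶜ : Finset W)) (e : A ≃ B)
    (e' : (Aᶜ : Finset V) ≃ (Bᶜ : Finset W))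
    (hadj : ∀ a b, H.Adj (e a) (e' b) ↔ G.Adj a b) : Nonempty (G ≃g H) := by
  rw [isBipartiteWith_compl_iff] at hG hH
  refine ⟨⟨(sumComplEquiv A).symm.trans ((e.sumCongr e').trans (sumComplEquiv B)), fun {x y} => ?_⟩⟩
  obtain ⟨x, rfl⟩ := (sumComplEquiv A).surjective x
  obtain ⟨y, rfl⟩ := (sumComplEquiv A).surjective y
  simp only [Equiv.trans_apply, Equiv.symm_apply_apply]
  rcases x with a | b <;> rcases y with a' | b'
  · exact iff_of_false (fun h => (hH h).1 (e a).2 (e a').2) (fun h => (hG h).1 a.2 a'.2)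
  · exact hadj a b'
  · rw [H.adj_comm, G.adj_comm]
    exact hadj a' b
  · exact iff_of_false
      (fun h => Finset.mem_compl.1 (e' b).2 ((hH h).2 (Finset.mem_compl.1 (e' b').2)))
      (fun h => Finset.mem_compl.1 b.2 ((hG h).2 (Finset.mem_compl.1 b'.2)))

namespace IsHub

variable {G : SimpleGraph V} {A : Finset V} {u : V}

/-- The unique neighbor of a vertex `a ≠ u` of `A`, with value `none` at the hub `u`. -/
noncomputable def parent (h : IsHub G A u) (a : A) : Option (Aᶜ : Finset V) :=
  if hau : (a : V) = u then none
  else some ⟨(h.existsUnique_adj a.2 hau).choose, Finset.mem_compl.2 <|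
    (isBipartiteWith_compl_iff.1 h.isBipartiteWith
      (h.existsUnique_adj a.2 hau).choose_spec.1).1 a.2⟩

lemma parent_eq_none_iff (h : IsHub G A u) {a : A} : h.parent a = none ↔ (a : V) = u := by
  simp [parent]

lemma parent_eq_some_iff (h : IsHub G A u) {a : A} {b : (Aᶜ : Finset V)} :
    h.parent a = some b ↔ (a : V) ≠ u ∧ G.Adj a b := by
  by_cases hau : (a : V) = u
  · simp [parent, hau]
  have hspec := (h.existsUnique_adj a.2 hau).choose_spec
  simp only [parent, hau, dite_false, Option.some.injEq, Subtype.ext_iff, ne_eq, not_false_eq_true,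
    true_and]
  exact ⟨fun hb => hb ▸ hspec.1, fun hab => (hspec.2 _ hab).symm⟩

lemma adj_iff_parent (h : IsHub G A u) (a : A) (b : (Aᶜ : Finset V)) :
    G.Adj a b ↔ h.parent a = none ∨ h.parent a = some b := by
  rw [parent_eq_none_iff, parent_eq_some_iff]
  have hub : (a : V) = u → G.Adj a b := fun ha => ha ▸ h.adj_hub (Finset.mem_compl.1 b.2)
  tauto

lemma card_parent_eq_none (h : IsHub G A u) : Nat.card {a // h.parent a = none} = 1 := by
  simp only [parent_eq_none_iff]
  rw [card_subtype_coe (p := (· = u)) {u}, Finset.card_singleton]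
  have := h.hub_mem
  aesop

variable [DecidableRel G.Adj]

lemma card_parent_eq_some (h : IsHub G A u) (b : (Aᶜ : Finset V)) :
    Nat.card {a // h.parent a = some b} = excess G b := by
  have hub : u ∈ G.neighborFinset b := by simpa using (h.adj_hub (Finset.mem_compl.1 b.2)).symm
  simp only [parent_eq_some_iff]
  rw [excess, ← card_neighborFinset_eq_degree, ← Finset.card_erase_of_mem hub]
  refine card_subtype_coe (p := fun a => a ≠ u ∧ G.Adj a b) _ fun x => ?_
  have hx : G.Adj x b → x ∈ A := fun hxb =>
    (isBipartiteWith_compl_iff.1 h.isBipartiteWith hxb).2 (Finset.mem_compl.1 b.2)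
  simp only [Finset.mem_erase, mem_neighborFinset, G.adj_comm b]
  tauto

lemma nonempty_iso {H : SimpleGraph W} [DecidableRel H.Adj] {B : Finset W} {w : W}
    (hG : IsHub G A u) (hH : IsHub H B w)
    (hexc : Aᶜ.val.map (excess G) = Bᶜ.val.map (excess H)) : Nonempty (G ≃g H) := by
  obtain ⟨e', he'⟩ : ∃ e : (Aᶜ : Finset V) ≃ (Bᶜ : Finset W), ∀ b, excess H (e b) = excess G b :=
    exists_equiv_of_card_fiber_eq (f := fun b : (Aᶜ : Finset V) => excess G b)
      (g := fun b : (Bᶜ : Finset W) => excess H b) fun c => by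
        rw [card_subtype_coe_eq_count_map, card_subtype_coe_eq_count_map, hexc]
  obtain ⟨e, he⟩ : ∃ e : A ≃ B, ∀ a, hH.parent (e a) = (hG.parent a).map e' := by
    refine exists_equiv_of_card_fiber_eq fun c => ?_
    rcases c with _ | b
    · simp only [Option.map_eq_none_iff, hG.card_parent_eq_none, hH.card_parent_eq_none]
    · obtain ⟨b, rfl⟩ := e'.surjective b
      have hmap (a : A) : (hG.parent a).map e' = some (e' b) ↔ hG.parent a = some b := by
        simp [Option.map_eq_some_iff]
      simp only [hmap, hG.card_parent_eq_some, hH.card_parent_eq_some, he']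
  refine nonempty_iso_of_isBipartiteWith hG.isBipartiteWith hH.isBipartiteWith e e' fun a b => ?_
  simp [hG.adj_iff_parent, hH.adj_iff_parent, he]

end IsHub

end Isomorphism

section BTree

lemma card_filter_le_val_and_val_lt {n s t : ℕ} (ht : t ≤ n) :
    (Finset.univ.filter fun x : Fin n => s ≤ x.val ∧ x.val < t).card = t - s := by
  rw [← Nat.card_Ico, ← Finset.card_map Fin.valEmbedding]
  congr 1
  ext m
  simp only [Finset.mem_map, Finset.mem_filter, Finset.mem_univ, true_and, Finset.mem_Ico,
    Fin.valEmbedding_apply]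
  exact ⟨by rintro ⟨x, hx, rfl⟩; exact hx, fun hm => ⟨⟨m, by omega⟩, hm, rfl⟩⟩

/-- The part of size `p` of `B_{p,q}^{k,l}`: the hub `0` and the pendant leaves of its neighbors
`1, …, q`. -/
def bTreePart (p q : ℕ) : Finset (Fin (p + q)) :=
  Finset.univ.filter fun x => x.val = 0 ∨ q < x.val

variable {p q k l : ℕ}

lemma mem_bTreePart {x : Fin (p + q)} : x ∈ bTreePart p q ↔ x.val = 0 ∨ q < x.val := by
  simp [bTreePart]

lemma compl_bTreePart_map_val (hp : 1 ≤ p) :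
    (bTreePart p q)ᶜ.val.map Fin.val = (Multiset.range q).map (· + 1) := by
  have hcompl : (bTreePart p q)ᶜ.map Fin.valEmbedding =
      (Finset.range q).map ⟨(· + 1), add_left_injective 1⟩ := by
    ext m
    simp only [Finset.mem_map, Finset.mem_compl, mem_bTreePart, Fin.valEmbedding_apply,
      Finset.mem_range, Function.Embedding.coeFn_mk]
    exact ⟨by rintro ⟨x, hx, rfl⟩; exact ⟨x.val - 1, by omega⟩,
      by rintro ⟨i, hi, rfl⟩; exact ⟨⟨i + 1, by omega⟩, by simp; omega⟩⟩
  exact congrArg Finset.val hcompl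

lemma card_bTreePart (hp : 1 ≤ p) : (bTreePart p q).card = p := by
  have hcompl := congrArg Multiset.card (compl_bTreePart_map_val (q := q) hp)
  have hcard := (bTreePart p q).card_add_card_compl
  simp only [Multiset.card_map, Multiset.card_range, Finset.card_val, Fintype.card_fin] at *
  omega

lemma bTree_adj_iff {b x : Fin (p + q)} (hb : b ∉ bTreePart p q) (hx : x.val ≠ 0) :
    (BTree p q k l).Adj b x ↔ b.val = 2 ∧ q + 1 ≤ x.val ∧ x.val ≤ q + k ∨
      q + k + 1 ≤ x.val ∧ x.val ≤ q + k + l ∧ b.val = x.val - (q + k) + 2 ∨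
      b.val = 1 ∧ q + k + l + 1 ≤ x.val := by
  rw [mem_bTreePart] at hb
  simp only [BTree, fromRel_adj, ne_eq, Fin.ext_iff]
  omega

lemma card_compl_of_card_eq {A : Finset (Fin (p + q))} (hA : A.card = p) : Aᶜ.card = q := by
  rw [Finset.card_compl, hA, Fintype.card_fin, Nat.add_sub_cancel_left]

lemma isHub_bTree (hl : l + 2 ≤ q) (hkl : k + l + 1 ≤ p) :
    IsHub (BTree p q k l) (bTreePart p q) ⟨0, by omega⟩ := by
  refine ⟨isBipartiteWith_compl_iff.2 fun x y hxy => ?_, mem_bTreePart.2 (.inl rfl),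
    fun b hb => ?_, fun a ha ha0 => ?_⟩
  · simp only [BTree, fromRel_adj] at hxy
    simp only [mem_bTreePart]
    omega
  · simp only [mem_bTreePart] at hb
    simp only [BTree, fromRel_adj, ne_eq, Fin.ext_iff, true_and]
    omega
  · simp only [mem_bTreePart, ne_eq, Fin.ext_iff] at ha ha0
    obtain ⟨m, hm, hadj⟩ : ∃ m < p + q, ∀ b, (BTree p q k l).Adj a b ↔ b.val = m := by
      simp only [BTree, fromRel_adj, ne_eq, Fin.ext_iff]
      refine ⟨if a.val ≤ q + k then 2 else if a.val ≤ q + k + l then a.val - (q + k) + 2 else 1,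
        ?_, fun b => ?_⟩ <;> split_ifs <;> omega
    exact ⟨⟨m, hm⟩, (hadj _).2 rfl, fun b hb => Fin.ext ((hadj b).1 hb)⟩

lemma excess_bTree_eq_sub [DecidableRel (BTree p q k l).Adj] (hl : l + 2 ≤ q)
    (hkl : k + l + 1 ≤ p) {b : Fin (p + q)} (hb : b ∉ bTreePart p q) {s t : ℕ} (ht : t ≤ p + q)
    (hst : ∀ x : Fin (p + q), x.val ≠ 0 ∧ (BTree p q k l).Adj b x ↔ s ≤ x.val ∧ x.val < t) :
    excess (BTree p q k l) b = t - s := by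
  have hub := ((isHub_bTree hl hkl).adj_hub hb).symm
  rw [← card_filter_le_val_and_val_lt ht, excess, ← card_neighborFinset_eq_degree,
    ← Finset.card_erase_of_mem ((mem_neighborFinset _ _ _).2 hub)]
  congr 1
  ext x
  simp [← hst, Fin.ext_iff]

lemma excess_bTree [DecidableRel (BTree p q k l).Adj] (hl : l + 2 ≤ q) (hkl : k + l + 1 ≤ p)
    {b : Fin (p + q)} (hb : b ∉ bTreePart p q) : excess (BTree p q k l) b =
      if b.val = 1 then p - 1 - k - l else if b.val = 2 then k else
        if b.val ≤ l + 2 then 1 else 0 := by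
  have heq {s t : ℕ} (ht : t ≤ p + q) (hst : ∀ x : Fin (p + q), x.val ≠ 0 ∧
      (b.val = 2 ∧ q + 1 ≤ x.val ∧ x.val ≤ q + k ∨
        q + k + 1 ≤ x.val ∧ x.val ≤ q + k + l ∧ b.val = x.val - (q + k) + 2 ∨
        b.val = 1 ∧ q + k + l + 1 ≤ x.val) ↔ s ≤ x.val ∧ x.val < t) :
      excess (BTree p q k l) b = t - s :=
    excess_bTree_eq_sub hl hkl hb ht fun x =>
      (and_congr_right fun hx => bTree_adj_iff hb hx).trans (hst x)
  rw [mem_bTreePart] at hb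
  split_ifs with h1 h2 h3
  · rw [heq (s := q + k + l + 1) le_rfl fun x => by omega]
    omega
  · rw [heq (s := q + 1) (t := q + k + 1) (by omega) fun x => by omega]
    omega
  · rw [heq (s := q + k + b.val - 2) (t := q + k + b.val - 1) (by omega) fun x => by omega]
    omega
  · rw [heq (s := 0) (t := 0) (by omega) fun x => by omega]

lemma map_excess_bTree [DecidableRel (BTree p q k l).Adj] (hl : l + 2 ≤ q)
    (hkl : k + l + 1 ≤ p) : (bTreePart p q)ᶜ.val.map (excess (BTree p q k l)) =
      (p - 1 - k - l) ::ₘ k ::ₘ (Multiset.replicate l 1 + Multiset.replicate (q - 2 - l) 0) := by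
  obtain ⟨m, rfl⟩ := Nat.exists_eq_add_of_le hl
  let f (i : ℕ) := if i = 1 then p - 1 - k - l else if i = 2 then k else if i ≤ l + 2 then 1 else 0
  have hone (i : ℕ) (hi : i < l) : f (i + 3) = 1 := by
    simp only [f]
    split_ifs <;> omega
  have hzero (i : ℕ) : f (l + i + 3) = 0 := by
    simp only [f]
    split_ifs <;> omega
  have hf : (bTreePart p (l + 2 + m))ᶜ.val.map (excess (BTree p (l + 2 + m) k l)) =
      (Multiset.range (l + 2 + m)).map fun i => f (i + 1) := by
    have hmap := congrArg (Multiset.map f)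
      (compl_bTreePart_map_val (p := p) (q := l + 2 + m) (by omega))
    simp only [Multiset.map_map, Function.comp_def] at hmap
    exact (Multiset.map_congr rfl fun b hb =>
      excess_bTree hl hkl (Finset.mem_compl.1 hb)).trans hmap
  have hrange : Multiset.range (l + 2 + m) = 0 ::ₘ 1 ::ₘ
      ((Multiset.range l).map (· + 2) + (Multiset.range m).map (l + · + 2)) := by
    rw [show l + 2 + m = 2 + (l + m) by omega, Multiset.range_add, Multiset.range_add,
      show Multiset.range 2 = 0 ::ₘ 1 ::ₘ 0 from rfl]
    simp [add_comm 2]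
  rw [hf, hrange, show l + 2 + m - 2 - l = m by omega]
  simp only [Multiset.map_cons, Multiset.map_add, Multiset.map_map, Function.comp_def]
  rw [Multiset.map_congr rfl fun i hi => hone i (Multiset.mem_range.1 hi),
    Multiset.map_congr rfl fun i _ => hzero i]
  simp [f]

lemma sum_excess_bTree_pow {n : ℕ} [DecidableRel (BTree p q k l).Adj] (hl : l + 2 ≤ q)
    (hkl : k + l + 1 ≤ p) (hn : n ≠ 0) : ∑ v, excess (BTree p q k l) v ^ n =
      (q - 1) ^ n + ((p - 1 - k - l) ^ n + (k ^ n + l)) := by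
  rw [(isHub_bTree hl hkl).sum_excess_pow hn, card_compl_of_card_eq (card_bTreePart (by omega))]
  have hmap := congrArg (fun t => (t.map (· ^ n)).sum) (map_excess_bTree hl hkl)
  simp only [Multiset.map_map, Function.comp_def, Finset.sum_map_val] at hmap
  rw [hmap]
  simp [hn]

end BTree

section Classification

lemma exists_eq_replicate_add_replicate_of_le_one {t : Multiset ℕ} (ht : ∀ x ∈ t, x ≤ 1) :
    ∃ l m, t = Multiset.replicate l 1 + Multiset.replicate m 0 := by
  induction t using Multiset.induction_on with
  | empty => exact ⟨0, 0, rfl⟩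
  | cons x t ih =>
    obtain ⟨l, m, rfl⟩ := ih fun y hy => ht y (Multiset.mem_cons_of_mem hy)
    obtain rfl | rfl : x = 0 ∨ x = 1 := by
      have := ht x (Multiset.mem_cons_self x _)
      omega
    · exact ⟨l, m + 1, by simp⟩
    · exact ⟨l + 1, m, by simp⟩

lemma exists_eq_cons_of_sum_le_two {t : Multiset ℕ} (hcard : 3 ≤ t.card) (hsum : t.sum ≤ 2) :
    ∃ k l, (k = 0 ∧ l ≤ 2 ∨ k = 2 ∧ l = 0) ∧ t.sum = k + l ∧
      t = k ::ₘ (Multiset.replicate l 1 + Multiset.replicate (t.card - 1 - l) 0) := by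
  by_cases hle : ∀ x ∈ t, x ≤ 1
  · obtain ⟨l, m, rfl⟩ := exists_eq_replicate_add_replicate_of_le_one hle
    simp only [Multiset.card_add, Multiset.card_replicate, Multiset.sum_add,
      Multiset.sum_replicate, smul_eq_mul, mul_one, mul_zero, add_zero] at hcard hsum ⊢
    refine ⟨0, l, .inl ⟨rfl, hsum⟩, (zero_add l).symm, ?_⟩
    rw [← Multiset.add_cons, ← Multiset.replicate_succ]
    congr 2
    omega
  · push Not at hle
    obtain ⟨x, hx, hlt⟩ := hle
    obtain ⟨t, rfl⟩ := Multiset.exists_cons_of_mem hx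
    simp only [Multiset.sum_cons, Multiset.card_cons] at hcard hsum ⊢
    have hzero : t.sum = 0 := by omega
    refine ⟨2, 0, .inr ⟨rfl, rfl⟩, by omega, ?_⟩
    rw [show x = 2 by omega]
    simpa using Multiset.eq_replicate_card.2 (Multiset.sum_eq_zero_iff.1 hzero)

variable {p q : ℕ}

lemma IsHub.exists_nonempty_iso_bTree {T : SimpleGraph (Fin (p + q))} [DecidableRel T.Adj]
    {A : Finset (Fin (p + q))} {u b : Fin (p + q)} (hq : 4 ≤ q)
    (h : IsHub T A u) (hA : A.card = p) (hb : b ∉ A) (hexc : p ≤ excess T b + 3) :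
    ∃ k l, (k = 0 ∧ l ≤ 2 ∨ k = 2 ∧ l = 0) ∧ Nonempty (T ≃g BTree p q k l) := by
  have : Nontrivial (Fin (p + q)) := Fin.nontrivial_iff_two_le.2 (by omega)
  obtain ⟨t, ht⟩ := Multiset.exists_cons_of_mem
    (Multiset.mem_map_of_mem (excess T) (Finset.mem_compl.2 hb))
  have hcard : t.card + 1 = q := by
    rw [← Multiset.card_cons, ← ht, Multiset.card_map, Finset.card_val,
      card_compl_of_card_eq hA]
  have hsum : excess T b + t.sum + 1 = p := by
    rw [← Multiset.sum_cons, ← ht]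
    exact (sum_excess_compl_add_one h.isTree h.isBipartiteWith).trans hA
  obtain ⟨k, l, hkl, htsum, heq⟩ := exists_eq_cons_of_sum_le_two (t := t) (by omega) (by omega)
  classical
  refine ⟨k, l, hkl, h.nonempty_iso (isHub_bTree (by omega) (by omega)) ?_⟩
  rw [ht, map_excess_bTree (by omega) (by omega), heq, show excess T b = p - 1 - k - l by omega,
    show t.card - 1 - l = q - 2 - l by omega]

end Classification

section PowerSums

variable {ι : Type*} {s : Finset ι} {x : ι → ℕ}

lemma sum_pow_succ_le_mul_sum_pow {m : ℕ} (hx : ∀ i ∈ s, x i ≤ m) (k : ℕ) :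
    ∑ i ∈ s, x i ^ (k + 1) ≤ m * ∑ i ∈ s, x i ^ k := by
  rw [Finset.mul_sum]
  exact Finset.sum_le_sum fun i hi => by
    rw [pow_succ']
    exact Nat.mul_le_mul_right _ (hx i hi)

lemma sum_sq_le_sq_add_sq {a b : ℕ} (hab : b ≤ a) (hx : ∀ i ∈ s, x i ≤ a)
    (hsum : ∑ i ∈ s, x i ≤ a + b) : ∑ i ∈ s, x i ^ 2 ≤ a ^ 2 + b ^ 2 := by
  classical
  by_cases hlarge : ∃ i ∈ s, b ≤ x i
  · obtain ⟨i, hi, hbi⟩ := hlarge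
    have hrest : ∑ j ∈ s.erase i, x j ≤ a + b - x i := by
      rw [← Finset.add_sum_erase s x hi] at hsum
      omega
    calc ∑ j ∈ s, x j ^ 2 = x i ^ 2 + ∑ j ∈ s.erase i, x j ^ 2 :=
          (Finset.add_sum_erase s _ hi).symm
      _ ≤ x i ^ 2 + (a + b - x i) ^ 2 := by
          gcongr
          exact (Finset.sum_sq_le_sq_sum_of_nonneg fun _ _ => Nat.zero_le _).trans
            (Nat.pow_le_pow_left hrest 2)
      _ ≤ a ^ 2 + b ^ 2 := by
          obtain ⟨c, hc⟩ := Nat.exists_eq_add_of_le hbi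
          obtain ⟨d, rfl⟩ := Nat.exists_eq_add_of_le (hx i hi)
          rw [show x i + d + b - x i = d + b by omega, hc]
          nlinarith [Nat.zero_le (c * d)]
  · push Not at hlarge
    have := sum_pow_succ_le_mul_sum_pow (fun i hi => (hlarge i hi).le) 1
    simp only [pow_one] at this
    nlinarith

lemma sum_pow_add_two_le {a b : ℕ} (hab : b ≤ a) (hx : ∀ i ∈ s, x i ≤ a)
    (hsum : ∑ i ∈ s, x i ≤ a + b) (n : ℕ) :
    ∑ i ∈ s, x i ^ (n + 2) ≤ a ^ n * (a ^ 2 + b ^ 2) := by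
  induction n with
  | zero => simpa using sum_sq_le_sq_add_sq hab hx hsum
  | succ n ih =>
    rw [pow_succ', mul_assoc]
    exact (sum_pow_succ_le_mul_sum_pow hx (n + 2)).trans (Nat.mul_le_mul_left a ih)

lemma sum_pow_succ_le_pow_succ (n : ℕ) : ∑ i ∈ s, x i ^ (n + 1) ≤ (∑ i ∈ s, x i) ^ (n + 1) := by
  induction n with
  | zero => simp
  | succ n ih =>
    rw [pow_succ' _ (n + 1)]
    exact (sum_pow_succ_le_mul_sum_pow (fun i hi =>
      Finset.single_le_sum (fun _ _ => Nat.zero_le _) hi) (n + 1)).trans (Nat.mul_le_mul_left _ ih)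

variable {r : ℕ}

lemma sum_sq_le_of_sum_eq_add_three (hx : ∀ i ∈ s, x i ≤ r) (hsum : ∑ i ∈ s, x i = r + 3) :
    ∑ i ∈ s, x i ^ 2 ≤ (r + 1) ^ 2 + 2 := by
  obtain hr | hr := le_total r 3
  · have := sum_pow_succ_le_mul_sum_pow hx 1
    simp only [pow_one] at this
    nlinarith
  · have := sum_sq_le_sq_add_sq hr hx hsum.le
    nlinarith

lemma sum_cube_lt_of_sum_eq_add_three (hx : ∀ i ∈ s, x i ≤ r) (hsum : ∑ i ∈ s, x i = r + 3) :
    ∑ i ∈ s, x i ^ 3 < (r + 1) ^ 3 + 2 := by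
  have hsq := sum_sq_le_of_sum_eq_add_three hx hsum
  calc ∑ i ∈ s, x i ^ 3 ≤ r * ∑ i ∈ s, x i ^ 2 := sum_pow_succ_le_mul_sum_pow hx 2
    _ ≤ r * ((r + 1) ^ 2 + 2) := by gcongr
    _ < (r + 1) ^ 3 + 2 := by nlinarith

end PowerSums

section ExcessBounds

variable {V : Type*} [Fintype V] [DecidableEq V] [Nontrivial V] {G : SimpleGraph V}
  [DecidableRel G.Adj] {A : Finset V} {r t : ℕ}

-- For `p = r + 4` and `q = t + 2` the bounds below are the power sums of `B_{p,q}^{0,2}`.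
lemma IsHub.sum_excess_pow_two_le {u : V} (h : IsHub G A u) (hA : A.card = r + 4)
    (hAc : Aᶜ.card = t + 2) (hexc : ∀ b ∉ A, excess G b ≤ r) :
    ∑ v, excess G v ^ 2 ≤ (t + 1) ^ 2 + ((r + 1) ^ 2 + 2) := by
  have hsum := sum_excess_compl_add_one h.isTree h.isBipartiteWith
  rw [h.sum_excess_pow two_ne_zero, hAc, Nat.add_sub_cancel (m := 1)]
  gcongr
  exact sum_sq_le_of_sum_eq_add_three (fun b hb => hexc b (Finset.mem_compl.1 hb)) (by omega)

lemma IsHub.sum_excess_pow_three_lt {u : V} (h : IsHub G A u) (hA : A.card = r + 4)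
    (hAc : Aᶜ.card = t + 2) (hexc : ∀ b ∉ A, excess G b ≤ r) :
    ∑ v, excess G v ^ 3 < (t + 1) ^ 3 + ((r + 1) ^ 3 + 2) := by
  have hsum := sum_excess_compl_add_one h.isTree h.isBipartiteWith
  rw [h.sum_excess_pow three_ne_zero, hAc, Nat.add_sub_cancel (m := 1)]
  gcongr
  exact sum_cube_lt_of_sum_eq_add_three (fun b hb => hexc b (Finset.mem_compl.1 hb)) (by omega)

lemma excess_add_two_le_of_degree_ne (hG : G.IsTree) (hA : G.IsBipartiteWith A (Aᶜ : Finset V))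
    {a : V} (ha : a ∈ A) (hdeg : G.degree a ≠ Aᶜ.card) : excess G a + 2 ≤ Aᶜ.card := by
  have hle := isBipartiteWith_degree_le hA ha
  have := excess_add_one_of_isTree hG a
  omega

lemma sum_excess_pow_add_two_le (hG : G.IsTree) (hbip : G.IsBipartiteWith A (Aᶜ : Finset V))
    (hA : A.card = r + 1) (hAc : Aᶜ.card = t + 2) (ht : 1 ≤ t)
    (hdeg : ∀ a ∈ A, G.degree a ≠ Aᶜ.card) (n : ℕ) :
    ∑ v, excess G v ^ (n + 2) ≤ t ^ n * (t ^ 2 + 1 ^ 2) + r ^ (n + 2) := by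
  have hsum := sum_excess_add_one hG hbip
  have hsum' := sum_excess_compl_add_one hG hbip
  have hexc : ∀ a ∈ A, excess G a ≤ t := by
    intro a ha
    have := excess_add_two_le_of_degree_ne hG hbip ha (hdeg a ha)
    omega
  rw [← Finset.sum_add_sum_compl A, show r = ∑ b ∈ Aᶜ, excess G b by omega]
  exact add_le_add (sum_pow_add_two_le ht hexc (by omega) n) (sum_pow_succ_le_pow_succ (n + 1))

lemma sum_excess_pow_two_le (hG : G.IsTree) (hbip : G.IsBipartiteWith A (Aᶜ : Finset V))
    (hA : A.card = r + 4) (hAc : Aᶜ.card = t + 2) (hrt : 2 * r + 3 ≤ t)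
    (hdeg : ∀ a ∈ A, G.degree a ≠ Aᶜ.card) :
    ∑ v, excess G v ^ 2 ≤ (t + 1) ^ 2 + ((r + 1) ^ 2 + 2) := by
  refine (sum_excess_pow_add_two_le (r := r + 3) hG hbip hA hAc (by omega) hdeg 0).trans ?_
  simp only [pow_zero, one_mul, zero_add]
  nlinarith

lemma sum_excess_pow_three_lt (hG : G.IsTree) (hbip : G.IsBipartiteWith A (Aᶜ : Finset V))
    (hA : A.card = r + 4) (hAc : Aᶜ.card = t + 2) (hrt : 2 * r + 3 ≤ t)
    (hdeg : ∀ a ∈ A, G.degree a ≠ Aᶜ.card) :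
    ∑ v, excess G v ^ 3 < (t + 1) ^ 3 + ((r + 1) ^ 3 + 2) := by
  refine (sum_excess_pow_add_two_le (r := r + 3) hG hbip hA hAc (by omega) hdeg 1).trans_lt ?_
  simp only [pow_one, Nat.reduceAdd]
  nlinarith

end ExcessBounds

lemma sLt_bTree_of_sum_excess_pow {p q k l : ℕ} {T : SimpleGraph (Fin (p + q))} [DecidableRel T.Adj]
    {A : Finset (Fin (p + q))} (hl : l + 2 ≤ q)
    (hkl : k + l + 1 ≤ p) (hn : 7 ≤ p + q) (hT : T.IsTree)
    (hbip : T.IsBipartiteWith A (Aᶜ : Finset (Fin (p + q)))) (hA : A.card = p)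
    (hsq : ∑ v, excess T v ^ 2 ≤ (q - 1) ^ 2 + ((p - 1 - k - l) ^ 2 + (k ^ 2 + l)))
    (hcube : ∑ v, excess T v ^ 3 < (q - 1) ^ 3 + ((p - 1 - k - l) ^ 3 + (k ^ 3 + l))) :
    SLt T (BTree p q k l) := by
  classical
  have hub := isHub_bTree hl hkl
  have : Nontrivial (Fin (p + q)) := Fin.nontrivial_iff_two_le.2 (by omega)
  rw [← sum_excess_bTree_pow hl hkl two_ne_zero] at hsq
  rw [← sum_excess_bTree_pow hl hkl three_ne_zero] at hcube
  refine sLt_of_sum_excess_pow (by rwa [Fintype.card_fin]) hT hub.isTree hsq hcube ?_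
  have hB := card_bTreePart (p := p) (q := q) (by omega)
  have hsum : ∑ a ∈ A, excess T a = ∑ a ∈ bTreePart p q, excess (BTree p q k l) a := by
    have hTsum := sum_excess_add_one hT hbip
    have hBsum := sum_excess_add_one hub.isTree hub.isBipartiteWith
    rw [card_compl_of_card_eq hA] at hTsum
    rw [card_compl_of_card_eq hB] at hBsum
    omega
  have hsum' : ∑ b ∈ Aᶜ, excess T b = ∑ b ∈ (bTreePart p q)ᶜ, excess (BTree p q k l) b := by
    have hTsum := sum_excess_compl_add_one hT hbip
    have hBsum := sum_excess_compl_add_one hub.isTree hub.isBipartiteWith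
    omega
  rw [hub.edgeExcess_eq, ← hsum, ← hsum']
  exact edgeExcess_le hbip

/-- For `4 ≤ p < q`, `n = p + q` and `2p < q + 4`, every tree
`T ∈ 𝒯_n^{p,q}` isomorphic to none of `B_{p,q}^{0,0}`, `B_{p,q}^{0,1}`,
`B_{p,q}^{2,0}`, `B_{p,q}^{0,2}` satisfies `T ≺_s B_{p,q}^{0,2}`: in this case
`B_{p,q}^{0,2}` is the unique fourth last tree in the S-order among `𝒯_n^{p,q}`. -/
theorem stmt_9 (p q : ℕ) (hp : 4 ≤ p) (hpq : p < q) (h : 2 * p < q + 4)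
    (T : SimpleGraph (Fin (p + q))) (hT : TreeBip p q T)
    (h0 : ¬ Nonempty (T ≃g BTree p q 0 0))
    (h1 : ¬ Nonempty (T ≃g BTree p q 0 1))
    (h2 : ¬ Nonempty (T ≃g BTree p q 2 0))
    (h3 : ¬ Nonempty (T ≃g BTree p q 0 2)) :
    SLt T (BTree p q 0 2) := by
  classical
  obtain ⟨hTree, A, hA, hbip⟩ := hT
  rw [← isBipartiteWith_compl_iff] at hbip
  have : Nontrivial (Fin (p + q)) := Fin.nontrivial_iff_two_le.2 (by omega)
  obtain ⟨r, rfl⟩ := Nat.exists_eq_add_of_le' hp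
  obtain ⟨t, rfl⟩ := Nat.exists_eq_add_of_le' (show 2 ≤ q by omega)
  have hAc : Aᶜ.card = t + 2 := card_compl_of_card_eq hA
  have hslt := sLt_bTree_of_sum_excess_pow (k := 0) (l := 2) (by omega) (by omega) (by omega) hTree
    hbip hA
  by_cases hfull : ∃ u ∈ A, T.degree u = Aᶜ.card
  · obtain ⟨u, hu, hdeg⟩ := hfull
    have hub := IsHub.of_degree_eq hTree hbip hu hdeg
    have hexc : ∀ b ∉ A, excess T b ≤ r := by
      intro b hb
      by_contra hlt
      obtain ⟨k, l, ⟨rfl, hl⟩ | ⟨rfl, rfl⟩, hiso⟩ :=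
        hub.exists_nonempty_iso_bTree (by omega) hA hb (by omega)
      · interval_cases l <;> contradiction
      · contradiction
    exact hslt (hub.sum_excess_pow_two_le hA hAc hexc) (hub.sum_excess_pow_three_lt hA hAc hexc)
  · push Not at hfull
    exact hslt (sum_excess_pow_two_le hTree hbip hA hAc (by omega) hfull)
      (sum_excess_pow_three_lt hTree hbip hA hAc (by omega) hfull)
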